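/- arXiv:1609.01213 — 3 statements merged into one kernel-verified Lean document; each statement's English description precedes it below -/
import Mathlib

section
/- Let p be prime and k ∈ ℕ relatively prime to p. If M, n ∈ ℕ satisfy that the sum of the base-p^n digits of k is at most M and (M−1) ∣ (p^n − 1), then every polynomial over an algebraically closed field of characteristic p is a sum of at most 2(M−1) + [γ_{p^n}(k) = M] k-th powers, i.e. v(p,k) ≤ 2(M−1) + [γ_{p^n}(k) = M]. -/
noncomputable def waring (F : Type*) [Field F] (k : ℕ) : ℕ∞ :=
  sInf {s : ℕ∞ | ∃ n : ℕ, s = n ∧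
    ∀ f : Polynomial F, ∃ y : Fin n → Polynomial F, f = ∑ i, y i ^ k}

/-!
Let `q = p ^ n`, `m = M - 1`, and write `k` as a sum of powers of `q`, one for each unit of its
digit sum. If `ζ` is a primitive `m`-th root of unity then `ζ ^ q = ζ`, so
`(1 + ζ ^ i * x) ^ k` is a product of at most `m + 1` factors `1 + ζ ^ i * x ^ q ^ e`. Summing over
`i` with weights `ζ ^ (-i)` leaves a constant, the linear part `m * ∑ x ^ q ^ e` and, when there are
exactly `m + 1` factors, a multiple of `x ^ k`.

To isolate the terms with `e = 0`, first replace `k` by a multiple, altering every `e ≠ 0` so that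
`e ≡ 1` modulo `φ k + 1` while its residue modulo `φ k` is kept. For `ρ` of degree `φ k + 1` over
the field with `q` elements all the remaining `ρ ^ q ^ e` are equal to `ρ ^ q`. Hence subtracting
`ρ ^ q` times the identity for `x` from the identity for `ρ * x` leaves an affine function of `x`,
whose slope is a nonzero multiple of `k`, and every polynomial is a value of that function.
-/

open Finset

section SumsOfPowers

/-- `IsSumOfPowers k s x` says that `x` is a sum of `s` `k`-th powers. As `0` may be one of the
powers, for `0 < k` this is the same as being a sum of at most `s` of them. -/
def IsSumOfPowers {R : Type*} [Semiring R] (k s : ℕ) (x : R) : Prop :=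
  ∃ y : Fin s → R, x = ∑ i, y i ^ k

namespace IsSumOfPowers

variable {R S : Type*} [Semiring R] [Semiring S] {k : ℕ}

theorem zero : IsSumOfPowers k 0 (0 : R) :=
  ⟨Fin.elim0, by simp⟩

theorem add {s t : ℕ} {x y : R} (hx : IsSumOfPowers k s x) (hy : IsSumOfPowers k t y) :
    IsSumOfPowers k (s + t) (x + y) := by
  obtain ⟨u, rfl⟩ := hx
  obtain ⟨v, rfl⟩ := hy
  exact ⟨Fin.append u v, by simp [Fin.sum_univ_add]⟩

theorem sum {ι : Type*} (s : Finset ι) {c : ι → ℕ} {x : ι → R}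
    (h : ∀ i ∈ s, IsSumOfPowers k (c i) (x i)) :
    IsSumOfPowers k (∑ i ∈ s, c i) (∑ i ∈ s, x i) := by
  classical
  induction s using Finset.induction_on with
  | empty => exact zero
  | insert i s hi ih =>
    rw [sum_insert hi, sum_insert hi]
    exact (h i (mem_insert_self i s)).add (ih fun j hj => h j (mem_insert_of_mem hj))

theorem map {s : ℕ} {x : R} (φ : R →+* S) (h : IsSumOfPowers k s x) :
    IsSumOfPowers k s (φ x) := by
  obtain ⟨y, rfl⟩ := h
  exact ⟨fun i => φ (y i), by simp⟩

theorem smul_pow_of_dvd {F : Type*} [CommSemiring F] [Algebra F R] {l : ℕ} (hkl : k ∣ l)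
    (hroot : ∀ a : F, ∃ b, b ^ k = a) (a : F) (x : R) : IsSumOfPowers k 1 (a • x ^ l) := by
  obtain ⟨c, rfl⟩ := hkl
  obtain ⟨b, rfl⟩ := hroot a
  exact ⟨fun _ => b • x ^ c, by simp [smul_pow, ← pow_mul, mul_comm c]⟩

theorem of_affine {F A : Type*} [DivisionRing F] [Ring A] [Module F A] {s : ℕ} {a b : F}
    (ha : a ≠ 0) (h : ∀ x : A, IsSumOfPowers k s (a • x + b • (1 : A))) (x : A) :
    IsSumOfPowers k s x := by
  simpa [smul_inv_smul₀ ha] using h (a⁻¹ • (x - b • 1))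

end IsSumOfPowers

end SumsOfPowers

section Exponents

theorem pow_pow_eq_self {G : Type*} [Monoid G] {x : G} {a : ℕ} (h : x ^ a = x) (j : ℕ) :
    x ^ a ^ j = x := by
  simpa only [pow_iterate, Function.IsFixedPt] using
    (show Function.IsFixedPt (· ^ a) x from h).iterate j

theorem exists_ofDigits_eq_sum_pow (b : ℕ) (L : List ℕ) :
    ∃ e : Fin L.sum → ℕ, Nat.ofDigits b L = ∑ i, b ^ e i := by
  induction L with
  | nil => exact ⟨fun _ => 0, rfl⟩
  | cons a L ih =>
    obtain ⟨e, he⟩ := ih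
    rw [List.sum_cons]
    refine ⟨Fin.append (fun _ => 0) (fun i => e i + 1), ?_⟩
    simp [Nat.ofDigits_cons, he, Fin.sum_univ_add, pow_succ', mul_sum]

theorem dvd_sum_pow_add_totient_mul {ι : Type*} {s : Finset ι} {b k : ℕ} {e : ι → ℕ}
    (hb : b.Coprime k) (hk : k ∣ ∑ i ∈ s, b ^ e i) (t : ι → ℕ) :
    k ∣ ∑ i ∈ s, b ^ (e i + k.totient * t i) := by
  have hmod : ∑ i ∈ s, b ^ (e i + k.totient * t i) ≡ ∑ i ∈ s, b ^ e i [MOD k] :=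
    Nat.ModEq.sum fun i _ => by
      simpa [pow_add, pow_mul] using ((Nat.ModEq.pow_totient hb).pow (t i)).mul_left (b ^ e i)
  exact (hmod.dvd_iff dvd_rfl).2 hk

theorem exists_dvd_sum_pow_totient_add_one {ι : Type*} {s : Finset ι} {b k : ℕ} {e : ι → ℕ}
    (hb : b.Coprime k) (hk : k ∣ ∑ i ∈ s, b ^ e i) :
    ∃ e' : ι → ℕ, k ∣ ∑ i ∈ s, b ^ e' i ∧ (∀ i, e' i = 0 ↔ e i = 0) ∧
      ∀ i, e' i ≠ 0 → ∃ c, e' i = (k.totient + 1) * c + 1 := by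
  refine ⟨fun i => e i + k.totient * (e i - 1), dvd_sum_pow_add_totient_mul hb hk _, fun i => ?_,
    fun i hi => ⟨e i - 1, ?_⟩⟩
  · grind
  · obtain ⟨c, hc⟩ : ∃ c, e i = c + 1 := Nat.exists_eq_add_one.2 (by grind)
    simp only [hc, Nat.add_sub_cancel]
    ring

theorem natCast_sum_pow_eq_card {R ι : Type*} [Semiring R] {q : ℕ} (hq : (q : R) = 0)
    (s : Finset ι) (e : ι → ℕ) :
    ((∑ i ∈ s, q ^ e i : ℕ) : R) = #{i ∈ s | e i = 0} := by
  simp [hq, zero_pow_eq]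

end Exponents

section RootsOfUnity

theorem natCast_ne_zero_of_dvd_sub_one {R : Type*} [Ring R] [Nontrivial R] {m q : ℕ}
    (hq₀ : q ≠ 0) (hq : (q : R) = 0) (hm : m ∣ q - 1) : (m : R) ≠ 0 := by
  rintro hm₀
  obtain ⟨l, hl⟩ := hm
  have hsucc : q = m * l + 1 := by omega
  simp [hsucc, hm₀] at hq

theorem exists_pow_eq_self_and_pow_ne_self {F : Type*} [Field F] [IsSepClosed F] {a b : ℕ}
    (ha : 1 < a) (hab : a < b) (hb : (b : F) = 0) : ∃ ρ : F, ρ ^ b = ρ ∧ ρ ^ a ≠ ρ := by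
  have : NeZero ((b - 1 : ℕ) : F) :=
    ⟨natCast_ne_zero_of_dvd_sub_one (by omega) hb dvd_rfl⟩
  obtain ⟨ρ, hρ⟩ := HasEnoughRootsOfUnity.exists_primitiveRoot F (b - 1)
  have pow_eq_self_iff {c : ℕ} (hc : c ≠ 0) : ρ ^ c = ρ ↔ b - 1 ∣ c - 1 := by
    rw [← hρ.pow_eq_one_iff_dvd, ← mul_eq_right₀ (hρ.ne_zero (by omega)), pow_sub_one_mul hc]
  refine ⟨ρ, (pow_eq_self_iff (by omega)).2 dvd_rfl, fun h => ?_⟩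
  have := Nat.le_of_dvd (by omega) ((pow_eq_self_iff (by omega)).1 h)
  omega

variable {F R ι : Type*} [CommRing F] [CommRing R] [Algebra F R] {ζ : F} {m : ℕ}

theorem sum_range_pow_pow_eq_ite [IsDomain F] (hζ : IsPrimitiveRoot ζ m) (l : ℕ) :
    ∑ i ∈ range m, (ζ ^ i) ^ l = if m ∣ l then (m : F) else 0 := by
  simp_rw [pow_right_comm ζ _ l]
  split_ifs with hl
  · simp [(hζ.pow_eq_one_iff_dvd l).2 hl]
  · have hne : ζ ^ l - 1 ≠ 0 := sub_ne_zero.2 fun h => hl (hζ.dvd_of_pow_eq_one l h)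
    have hgeom := geom_sum_mul (ζ ^ l) m
    rw [pow_right_comm, hζ.pow_eq_one, one_pow, sub_self] at hgeom
    exact (mul_eq_zero.1 hgeom).resolve_right hne

theorem sum_range_smul_prod_one_add_smul [IsDomain F] (hζ : IsPrimitiveRoot ζ m) (a : ℕ)
    (s : Finset ι) (w : ι → R) :
    ∑ i ∈ range m, (ζ ^ i) ^ a • ∏ j ∈ s, (1 + ζ ^ i • w j) =
      ∑ l ∈ range (#s + 1),
        if m ∣ a + l then (m : R) * ∑ t ∈ s.powersetCard l, ∏ j ∈ t, w j else 0 := by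
  calc ∑ i ∈ range m, (ζ ^ i) ^ a • ∏ j ∈ s, (1 + ζ ^ i • w j)
      = ∑ i ∈ range m, ∑ t ∈ s.powerset, (ζ ^ i) ^ (a + #t) • ∏ j ∈ t, w j := by
        simp [prod_one_add, prod_smul, smul_sum, smul_smul, pow_add]
    _ = ∑ t ∈ s.powerset, (if m ∣ a + #t then (m : F) else 0) • ∏ j ∈ t, w j := by
        rw [sum_comm]
        simp_rw [← sum_smul, sum_range_pow_pow_eq_ite hζ]
    _ = _ := by
        rw [sum_powerset]
        refine sum_congr rfl fun l _ => ?_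
        rw [sum_congr rfl fun t ht => by rw [(mem_powersetCard.1 ht).2]]
        split_ifs <;> simp [Algebra.smul_def, mul_sum]

theorem dvd_sub_one_add_iff {m l : ℕ} (hm : 0 < m) (hl : l ≤ m + 1) :
    m ∣ m - 1 + l ↔ l = 0 ∧ m = 1 ∨ l = 1 ∨ l = m + 1 := by
  constructor
  · rintro ⟨c, hc⟩
    have hc₂ : c ≤ 2 := Nat.le_of_mul_le_mul_left (by omega : m * c ≤ m * 2) hm
    interval_cases c <;> omega
  · rintro (⟨rfl, rfl⟩ | rfl | rfl)
    · simp
    · exact ⟨1, by omega⟩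
    · exact ⟨2, by omega⟩

theorem sum_range_smul_prod_one_add_smul_of_card_le [IsDomain F]
    (hζ : IsPrimitiveRoot ζ m) {s : Finset ι} (hs : #s ≤ m + 1) (w : ι → R) :
    ∑ i ∈ range m, (ζ ^ i) ^ (m - 1) • ∏ j ∈ s, (1 + ζ ^ i • w j) =
      (if m = 1 then 1 else 0) + m * ∑ j ∈ s, w j +
        if #s = m + 1 then m * ∏ j ∈ s, w j else 0 := by
  obtain rfl | hm := m.eq_zero_or_pos
  · simp
  set E : ℕ → R := fun l => ∑ t ∈ s.powersetCard l, ∏ j ∈ t, w j with hE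
  have hE₀ : E 0 = 1 := by simp [hE]
  have hE₁ : E 1 = ∑ j ∈ s, w j := by simp [hE, powersetCard_one]
  have hE_full : E (m + 1) = if #s = m + 1 then ∏ j ∈ s, w j else 0 := by
    split_ifs with h
    · simp [hE, ← h]
    · simp [hE, powersetCard_eq_empty.2 (by omega : #s < m + 1)]
  have hlow : ∑ l ∈ range m, (if m ∣ m - 1 + (l + 1) then (m : R) * E (l + 1) else 0) =
      m * E 1 := by
    rw [sum_eq_single_of_mem 0 (mem_range.2 hm)]
    · simp [dvd_sub_one_add_iff hm]
    · intro l hl hl₀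
      rw [mem_range] at hl
      rw [if_neg (by rw [dvd_sub_one_add_iff hm (by omega)]; omega)]
  have hzero : (if m ∣ m - 1 + 0 then (m : R) * E 0 else 0) = if m = 1 then 1 else 0 := by
    by_cases hm₁ : m = 1
    · simp [hm₁, hE₀]
    · rw [if_neg (by rw [dvd_sub_one_add_iff hm (Nat.zero_le _)]; omega), if_neg hm₁]
  calc _ = ∑ l ∈ range (m + 2), if m ∣ m - 1 + l then (m : R) * E l else 0 := by
        rw [sum_range_smul_prod_one_add_smul hζ]
        refine sum_subset (range_subset_range.2 (by omega)) fun l _ hl => ?_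
        simp [powersetCard_eq_empty.2 (by simpa using hl : #s < l)]
    _ = _ := by
        rw [sum_range_succ, sum_range_succ', hlow, hzero, hE₁,
          if_pos ((dvd_sub_one_add_iff hm le_rfl).2 (.inr (.inr rfl))), hE_full, mul_ite, mul_zero,
          add_comm ((m : R) * _)]

/-- The sum of the `k`-th powers of `1 + ζ ^ i • x` for `i < m`, where the weight
`(ζ ^ i) ^ (m - 1)` stands for `ζ ^ (-i)`, as `ζ` will be an `m`-th root of unity. -/
def unityPowerSum (ζ : F) (m k : ℕ) (x : R) : R :=
  ∑ i ∈ range m, (ζ ^ i) ^ (m - 1) • (1 + ζ ^ i • x) ^ k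

theorem IsSumOfPowers.smul_unityPowerSum {k l : ℕ} (hkl : k ∣ l)
    (hroot : ∀ a : F, ∃ b, b ^ k = a) (a : F) (x : R) :
    IsSumOfPowers k m (a • unityPowerSum ζ m l x) := by
  simpa [unityPowerSum, smul_sum, smul_smul] using
    IsSumOfPowers.sum (range m) fun i _ => smul_pow_of_dvd hkl hroot (a * (ζ ^ i) ^ (m - 1)) _

end RootsOfUnity

section Frobenius

variable {F R ι : Type*} {p n : ℕ} [Fact p.Prime] [CommRing R] [CharP R p]

theorem one_add_smul_pow_sum [CommSemiring F] [Algebra F R] {c : F} (hc : c ^ p ^ n = c)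
    (s : Finset ι) (e : ι → ℕ) (x : R) :
    (1 + c • x) ^ ∑ j ∈ s, (p ^ n) ^ e j = ∏ j ∈ s, (1 + c • x ^ (p ^ n) ^ e j) := by
  rw [← prod_pow_eq_pow_sum]
  refine prod_congr rfl fun j _ => ?_
  rw [← pow_mul, add_pow_char_pow, one_pow, pow_mul, smul_pow, pow_pow_eq_self hc]

variable [CommRing F] [IsDomain F] [Algebra F R] {ζ : F} {m : ℕ} {s : Finset ι} {e : ι → ℕ}

theorem unityPowerSum_eq (hζ : IsPrimitiveRoot ζ m) (hmn : m ∣ p ^ n - 1)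
    (hs : #s ≤ m + 1) (x : R) :
    unityPowerSum ζ m (∑ j ∈ s, (p ^ n) ^ e j) x =
      (if m = 1 then 1 else 0) + m * ∑ j ∈ s, x ^ (p ^ n) ^ e j +
        if #s = m + 1 then m * x ^ ∑ j ∈ s, (p ^ n) ^ e j else 0 := by
  have hζq : ζ ^ p ^ n = ζ := by
    rw [← Nat.sub_add_cancel (NeZero.one_le : 1 ≤ p ^ n), pow_succ,
      (hζ.pow_eq_one_iff_dvd _).2 hmn, one_mul]
  have hζiq (i : ℕ) : (ζ ^ i) ^ p ^ n = ζ ^ i := by rw [pow_right_comm, hζq]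
  simp_rw [unityPowerSum, one_add_smul_pow_sum (hζiq _)]
  rw [sum_range_smul_prod_one_add_smul_of_card_le hζ hs, prod_pow_eq_pow_sum]

theorem unityPowerSum_smul_sub_smul (hζ : IsPrimitiveRoot ζ m)
    (hmn : m ∣ p ^ n - 1) (hs : #s ≤ m + 1) {ρ σ : F}
    (hρ : ∀ j ∈ s, e j ≠ 0 → ρ ^ (p ^ n) ^ e j = σ) (x : R) :
    unityPowerSum ζ m (∑ j ∈ s, (p ^ n) ^ e j) (ρ • x) -
        σ • unityPowerSum ζ m (∑ j ∈ s, (p ^ n) ^ e j) x =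
      (m * #{j ∈ s | e j = 0} * (ρ - σ)) • x + ((1 - σ) * if m = 1 then 1 else 0) • (1 : R) +
        (if #s = m + 1 then m * (ρ ^ (∑ j ∈ s, (p ^ n) ^ e j) - σ) else 0) •
          x ^ ∑ j ∈ s, (p ^ n) ^ e j := by
  have hlinear : ∑ j ∈ s, (ρ • x) ^ (p ^ n) ^ e j - σ • ∑ j ∈ s, x ^ (p ^ n) ^ e j =
      (#{j ∈ s | e j = 0} * (ρ - σ)) • x := by
    rw [smul_sum, ← sum_sub_distrib, card_eq_sum_ones, Nat.cast_sum, sum_mul, sum_smul, sum_filter]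
    refine sum_congr rfl fun j hj => ?_
    split_ifs with hj₀
    · simp [hj₀, sub_smul]
    · simp [smul_pow, hρ j hj hj₀]
  rw [unityPowerSum_eq hζ hmn hs, unityPowerSum_eq hζ hmn hs, mul_assoc, mul_smul (m : F),
    ← hlinear]
  split_ifs <;> simp [Algebra.smul_def, mul_pow] <;> ring

theorem isSumOfPowers_affine {k : ℕ} (hζ : IsPrimitiveRoot ζ m)
    (hmn : m ∣ p ^ n - 1) (hs : #s ≤ m + 1) (hk : k ∣ ∑ j ∈ s, (p ^ n) ^ e j)
    (hroot : ∀ a : F, ∃ b, b ^ k = a) {ρ σ : F}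
    (hρ : ∀ j ∈ s, e j ≠ 0 → ρ ^ (p ^ n) ^ e j = σ) (x : R) :
    IsSumOfPowers k (2 * m + if #s = m + 1 then 1 else 0)
      ((m * #{j ∈ s | e j = 0} * (ρ - σ)) • x +
        ((1 - σ) * if m = 1 then 1 else 0) • (1 : R)) := by
  have hid := unityPowerSum_smul_sub_smul hζ hmn hs hρ x
  rw [← sub_eq_iff_eq_add] at hid
  rw [← hid, two_mul, sub_eq_add_neg, sub_eq_add_neg, ← neg_smul, ← neg_smul]
  refine .add (.add ?_ (.smul_unityPowerSum hk hroot _ _)) ?_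
  · simpa using IsSumOfPowers.smul_unityPowerSum (m := m) (ζ := ζ) hk hroot 1 (ρ • x)
  · split_ifs
    · exact .smul_pow_of_dvd hk hroot _ _
    · simpa using IsSumOfPowers.zero

end Frobenius

section Waring

theorem isSumOfPowers_X_of_eq_sum_pow {F ι : Type*} [Field F] [IsSepClosed F] {p k m n : ℕ}
    [Fact p.Prime] [CharP F p] {s : Finset ι} {e : ι → ℕ} (hkp : k.Coprime p) (hn : 0 < n)
    (hmn : m ∣ p ^ n - 1) (hs : #s ≤ m + 1) (hk : k = ∑ j ∈ s, (p ^ n) ^ e j) :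
    IsSumOfPowers k (2 * m + if #s = m + 1 then 1 else 0) (Polynomial.X : Polynomial F) := by
  have hp : p.Prime := Fact.out
  have hq : 1 < p ^ n := Nat.one_lt_pow hn.ne' hp.one_lt
  have hqF : ((p ^ n : ℕ) : F) = 0 := by simp [hn.ne']
  have hkF : (k : F) ≠ 0 := ((CharP.isUnit_natCast_iff hp).2
    ((Nat.Prime.coprime_iff_not_dvd hp).1 hkp.symm)).ne_zero
  have hmF : (m : F) ≠ 0 := natCast_ne_zero_of_dvd_sub_one (by omega) hqF hmn
  have : NeZero (k : F) := ⟨hkF⟩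
  have : NeZero (m : F) := ⟨hmF⟩
  obtain ⟨ζ, hζ⟩ := HasEnoughRootsOfUnity.exists_primitiveRoot F m
  obtain ⟨e', hk', he'₀, he'⟩ :=
    exists_dvd_sum_pow_totient_add_one (hkp.symm.pow_left n) hk.dvd
  obtain ⟨ρ, hρ, hρq⟩ : ∃ ρ : F, ρ ^ (p ^ n) ^ (k.totient + 1) = ρ ∧ ρ ^ p ^ n ≠ ρ := by
    have hk₀ : 0 < k.totient := Nat.totient_pos.2 (Nat.pos_of_ne_zero fun h => hkF (by simp [h]))
    exact exists_pow_eq_self_and_pow_ne_self hq (lt_self_pow₀ hq (by omega)) (by simp [hn.ne'])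
  have hρe : ∀ j ∈ s, e' j ≠ 0 → ρ ^ (p ^ n) ^ e' j = ρ ^ p ^ n := by
    intro j _ hj
    obtain ⟨c, hc⟩ := he' j hj
    rw [hc, pow_succ, pow_mul, pow_mul, pow_pow_eq_self hρ]
  have hcard : (#{j ∈ s | e' j = 0} : F) = k := by
    simp_rw [he'₀, ← natCast_sum_pow_eq_card hqF, ← hk]
  have hslope : (m : F) * #{j ∈ s | e' j = 0} * (ρ - ρ ^ p ^ n) ≠ 0 := by
    rw [hcard]
    exact mul_ne_zero (mul_ne_zero hmF hkF) (sub_ne_zero.2 hρq.symm)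
  exact .of_affine hslope
    (isSumOfPowers_affine hζ hmn hs hk' (IsSepClosed.exists_pow_nat_eq · k) hρe) _

theorem main_theorem_general {F R : Type*} [Field F] [IsSepClosed F] [Ring R] [Algebra F R]
    (p k M n : ℕ) [Fact p.Prime] [CharP F p] (hcop : Nat.Coprime k p) (hn : 0 < n)
    (hγ : (Nat.digits (p ^ n) k).sum ≤ M) (hdvd : (M - 1) ∣ (p ^ n - 1)) (f : R) :
    IsSumOfPowers k (2 * (M - 1) + if (Nat.digits (p ^ n) k).sum = M then 1 else 0) f := by
  have hq₁ : 1 < p ^ n := Nat.one_lt_pow hn.ne' (Fact.out : p.Prime).one_lt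
  have hM : 0 < M - 1 := Nat.pos_of_dvd_of_pos hdvd (by omega)
  obtain ⟨e, he⟩ := exists_ofDigits_eq_sum_pow (p ^ n) (Nat.digits (p ^ n) k)
  rw [Nat.ofDigits_digits] at he
  have hX := isSumOfPowers_X_of_eq_sum_pow (F := F) (s := univ) hcop hn hdvd
    (by rw [card_univ, Fintype.card_fin]; omega) he
  simpa [show M - 1 + 1 = M by omega] using hX.map (Polynomial.aeval f).toRingHom

end Waring

theorem main_theorem (F : Type*) [Field F] [IsAlgClosed F]
    (p k M n : ℕ) [Fact p.Prime] [CharP F p]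
    (hcop : Nat.Coprime k p) (hn : 0 < n)
    (hγ : (Nat.digits (p ^ n) k).sum ≤ M)
    (hdvd : (M - 1) ∣ (p ^ n - 1)) :
    waring F k ≤ ((2 * (M - 1) + (if (Nat.digits (p ^ n) k).sum = M then 1 else 0) : ℕ) : ℕ∞) :=
  sInf_le ⟨_, rfl, main_theorem_general (F := F) p k M n hcop hn hγ hdvd⟩
end

section
/- Fix ε > 0. For all sufficiently large r ∈ ℕ, there exists a prime ℓ with ln(r) < ℓ ≤ (2+ε)·ln(r) such that ℓ does not divide r. -/
/-!
Let `F` be bounded and slowly decreasing, with a Laplace transform that extends continuously to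
the closed half-plane `0 ≤ Re z`. The kernels `u ↦ sinc² (T (u - y))` are Fourier transforms of
compactly supported functions (triangles, modulated by a character), so on the Laplace side the
averages of `F` against them become Fourier coefficients of an integrable function of compact
support, and tend to `0` as `y → ∞` by the Riemann–Lebesgue lemma. For large `T` the kernel
concentrates near `y`, and slow decrease then forces `F` itself to tend to `0`.

For `F u = ψ(eᵘ) / eᵘ - 1` the required extension comes from the non-vanishing of `ζ` on
`Re s = 1`, and the conclusion is the prime number theorem `ψ x ~ x`, hence `θ x ~ x`. If
`a + 1 < b` and `L = log r` is large, then `θ (b L) - θ (a L) ~ (b - a) L` exceeds `L`: the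
product of the primes in `(a L, b L]` exceeds `r`, so they cannot all divide `r`.
-/

open MeasureTheory Filter Topology Set
open scoped FourierTransform Real Convolution

lemma integrable_sinc_sq : Integrable fun v : ℝ ↦ Real.sinc v ^ 2 := by
  refine (integrable_inv_one_add_sq.const_mul 2).mono'
    (Real.continuous_sinc.pow 2).aestronglyMeasurable (Eventually.of_forall fun v ↦ ?_)
  have hsinc : Real.sinc v ^ 2 ≤ 1 := (sq_le_one_iff_abs_le_one _).2 (Real.abs_sinc_le_one v)
  have hsin : Real.sinc v ^ 2 * v ^ 2 ≤ 1 := by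
    rcases eq_or_ne v 0 with rfl | hv
    · simp
    · rw [Real.sinc_of_ne_zero hv, ← mul_pow, div_mul_cancel₀ _ hv]
      exact Real.sin_sq_le_one v
  rw [Real.norm_of_nonneg (sq_nonneg _), ← div_eq_mul_inv, le_div_iff₀ (by positivity)]
  linarith

lemma integral_sinc_sq_pos : 0 < ∫ v, Real.sinc v ^ 2 :=
  integral_pos_of_integrable_nonneg_nonzero (x := 0) (Real.continuous_sinc.pow 2)
    integrable_sinc_sq (fun _ ↦ sq_nonneg _) (by simp)

lemma fourier_indicator_Ioc {r : ℝ} (hr : 0 ≤ r) (w : ℝ) :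
    𝓕 (indicator (Ioc (-r) r) (1 : ℝ → ℂ)) w = 2 * r * Real.sinc (2 * π * r * w) := by
  have hinterval : 𝓕 (indicator (Ioc (-r) r) (1 : ℝ → ℂ)) w =
      ∫ t in -r..r, Complex.exp (↑(-2 * π * w * t) * Complex.I) := by
    rw [Real.fourier_real_eq_integral_exp_smul, intervalIntegral.integral_of_le (by linarith),
      ← integral_indicator measurableSet_Ioc]
    refine integral_congr_ae (Eventually.of_forall fun t ↦ ?_)
    by_cases ht : t ∈ Ioc (-r) r <;> simp [ht, mul_right_comm]
  rw [hinterval]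
  rcases eq_or_ne w 0 with rfl | hw
  · simp [two_mul]
  have hc : -2 * π * w ≠ 0 := by simp [hw, Real.pi_ne_zero]
  have hπ : (π : ℂ) ≠ 0 := by exact_mod_cast Real.pi_ne_zero
  have hw' : (w : ℂ) ≠ 0 := by exact_mod_cast hw
  rw [intervalIntegral.integral_comp_mul_left (fun t : ℝ ↦ Complex.exp (t * Complex.I)) hc,
    mul_neg, integral_exp_mul_I_eq_sinc, show -2 * π * w * r = -(2 * π * r * w) by ring,
    Real.sinc_neg, Complex.real_smul]
  push_cast
  field_simp

/-- The triangle function `t ↦ max 0 (2 * r - |t|)`, encoded as the convolution square of the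
indicator function of `(-r, r]`, so that its Fourier transform is visibly a squared `sinc`. -/
noncomputable def triangle (r : ℝ) : ℝ → ℂ :=
  indicator (Ioc (-r) r) 1 ⋆[ContinuousLinearMap.mul ℂ ℂ] indicator (Ioc (-r) r) 1

lemma integrable_indicator_Ioc_one (r : ℝ) : Integrable (indicator (Ioc (-r) r) (1 : ℝ → ℂ)) :=
  (integrableOn_const (by simp)).integrable_indicator measurableSet_Ioc

lemma integrable_triangle (r : ℝ) : Integrable (triangle r) :=
  (integrable_indicator_Ioc_one r).integrable_convolution _ (integrable_indicator_Ioc_one r)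

lemma hasCompactSupport_triangle (r : ℝ) : HasCompactSupport (triangle r) := by
  have hcpt : HasCompactSupport (indicator (Ioc (-r) r) (1 : ℝ → ℂ)) :=
    isCompact_Icc.of_isClosed_subset (isClosed_tsupport _)
      (closure_minimal (support_indicator_subset.trans Ioc_subset_Icc_self) isClosed_Icc)
  exact hcpt.convolution _ hcpt

lemma fourier_triangle {r : ℝ} (hr : 0 ≤ r) (w : ℝ) :
    𝓕 (triangle r) w = (2 * r * Real.sinc (2 * π * r * w)) ^ 2 := by
  rw [triangle, Real.fourier_mul_convolution_eq (integrable_indicator_Ioc_one r)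
    (integrable_indicator_Ioc_one r), fourier_indicator_Ioc hr, sq]

/-- The one-sided Laplace transform of `F`, which depends only on `F` on `(0, ∞)`; it takes the junk
value `0` where the integrand is not integrable. -/
noncomputable def laplaceTransform (F : ℝ → ℂ) (z : ℂ) : ℂ :=
  ∫ u in Ioi (0 : ℝ), F u * Complex.exp (-z * u)

section

variable {F : ℝ → ℂ} {C : ℝ}

lemma integrableOn_mul_exp_neg (hF : AEStronglyMeasurable F) (hC : ∀ u, ‖F u‖ ≤ C)
    {z : ℂ} (hz : 0 < z.re) :
    IntegrableOn (fun u : ℝ ↦ F u * Complex.exp (-z * u)) (Ioi 0) :=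
  (integrableOn_exp_mul_complex_Ioi (by simpa using hz) 0).bdd_mul hF.restrict
    (Eventually.of_forall hC)

lemma laplaceTransform_const (c : ℂ) {z : ℂ} (hz : 0 < z.re) :
    laplaceTransform (fun _ ↦ c) z = c / z := by
  rw [laplaceTransform, integral_const_mul, integral_exp_mul_complex_Ioi (by simpa using hz)]
  simp [div_eq_mul_inv]

lemma laplaceTransform_sub {F₁ F₂ : ℝ → ℂ} {z : ℂ}
    (h₁ : IntegrableOn (fun u : ℝ ↦ F₁ u * Complex.exp (-z * u)) (Ioi 0))
    (h₂ : IntegrableOn (fun u : ℝ ↦ F₂ u * Complex.exp (-z * u)) (Ioi 0)) :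
    laplaceTransform (fun u ↦ F₁ u - F₂ u) z = laplaceTransform F₁ z - laplaceTransform F₂ z := by
  simp_rw [laplaceTransform, sub_mul]
  exact integral_sub h₁ h₂

lemma fourier_indicator_mul_exp_neg (F : ℝ → ℂ) (σ t : ℝ) :
    𝓕 (indicator (Ioi 0) fun u : ℝ ↦ F u * Complex.exp (-(σ : ℂ) * u)) t =
      laplaceTransform F (σ + 2 * π * t * Complex.I) := by
  rw [laplaceTransform, Real.fourier_real_eq_integral_exp_smul,
    ← integral_indicator measurableSet_Ioi]
  refine integral_congr_ae (Eventually.of_forall fun u ↦ ?_)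
  by_cases hu : u ∈ Ioi (0 : ℝ)
  · simp only [hu, indicator_of_mem, smul_eq_mul]
    rw [mul_left_comm, ← Complex.exp_add]
    push_cast
    ring_nf
  · simp [hu]

lemma integral_mul_exp_neg_mul_fourier (hF : AEStronglyMeasurable F) (hC : ∀ u, ‖F u‖ ≤ C)
    {σ : ℝ} (hσ : 0 < σ) {g : ℝ → ℂ} (hg : Integrable g) :
    ∫ u in Ioi (0 : ℝ), F u * Complex.exp (-(σ : ℂ) * u) * 𝓕 g u =
      ∫ t : ℝ, laplaceTransform F (σ + 2 * π * t * Complex.I) * g t := by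
  have h := VectorFourier.integral_fourierIntegral_smul_eq_flip (L := innerₗ ℝ)
    Real.continuous_fourierChar continuous_inner
    ((integrableOn_mul_exp_neg hF hC (z := σ) (by simpa)).integrable_indicator measurableSet_Ioi) hg
  simp_rw [← fourier_indicator_mul_exp_neg]
  rw [← integral_indicator measurableSet_Ioi]
  simp only [flip_innerₗ, smul_eq_mul] at h
  refine Eq.trans ?_ h.symm
  refine integral_congr_ae (Eventually.of_forall fun u ↦ ?_)
  simp only [indicator_mul_left]
  rfl

variable {G : ℂ → ℂ} {g : ℝ → ℂ}

lemma tendsto_integral_mul_exp_neg_mul (hF : AEStronglyMeasurable F) (hC : ∀ u, ‖F u‖ ≤ C)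
    (hg : Integrable g) :
    Tendsto (fun σ : ℝ ↦ ∫ u in Ioi (0 : ℝ), F u * Complex.exp (-(σ : ℂ) * u) * g u) (𝓝[>] 0)
      (𝓝 (∫ u in Ioi (0 : ℝ), F u * g u)) := by
  refine tendsto_integral_filter_of_dominated_convergence (fun u ↦ C * ‖g u‖)
    (Eventually.of_forall fun σ ↦ ?_) ?_ (hg.norm.const_mul C).restrict
    (Eventually.of_forall fun u ↦ ?_)
  · exact ((hF.mul (by fun_prop)).mul hg.1).restrict
  · filter_upwards [self_mem_nhdsWithin] with σ (hσ : 0 < σ)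
    filter_upwards [ae_restrict_mem measurableSet_Ioi] with u (hu : 0 < u)
    have hexp : ‖Complex.exp (-(σ : ℂ) * u)‖ ≤ 1 := by
      rw [Complex.norm_exp, Real.exp_le_one_iff]
      simpa using (mul_pos hσ hu).le
    rw [norm_mul, norm_mul]
    gcongr
    exact (mul_le_of_le_one_right (norm_nonneg _) hexp).trans (hC u)
  · have hcont : Continuous fun σ : ℝ ↦ F u * Complex.exp (-(σ : ℂ) * u) * g u := by fun_prop
    simpa using (hcont.tendsto 0).mono_left nhdsWithin_le_nhds

lemma tendsto_integral_mul_of_continuousOn (hG : ContinuousOn G {z | 0 ≤ z.re})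
    (hg : Integrable g) (hgs : HasCompactSupport g) :
    Tendsto (fun σ : ℝ ↦ ∫ t : ℝ, G (σ + 2 * π * t * Complex.I) * g t) (𝓝[>] 0)
      (𝓝 (∫ t : ℝ, G (2 * π * t * Complex.I) * g t)) := by
  have hline {σ : ℝ} (hσ : 0 ≤ σ) : Continuous fun t : ℝ ↦ G (σ + 2 * π * t * Complex.I) :=
    hG.comp_continuous (by fun_prop) fun t ↦ by simpa
  have hcompact : IsCompact
      ((fun p : ℝ × ℝ ↦ (p.1 + 2 * π * p.2 * Complex.I : ℂ)) '' Icc 0 1 ×ˢ tsupport g) :=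
    (isCompact_Icc.prod hgs).image (by fun_prop)
  obtain ⟨M, hM⟩ := hcompact.exists_bound_of_continuousOn <| hG.mono <| by
    rintro _ ⟨⟨σ, t⟩, ⟨hσ, -⟩, rfl⟩
    simpa using hσ.1
  refine tendsto_integral_filter_of_dominated_convergence (fun t ↦ M * ‖g t‖) ?_ ?_
    (hg.norm.const_mul M) (Eventually.of_forall fun t ↦ ?_)
  · filter_upwards [self_mem_nhdsWithin] with σ (hσ : 0 < σ)
    exact (hline hσ.le).aestronglyMeasurable.mul hg.1
  · filter_upwards [Ioc_mem_nhdsGT zero_lt_one] with σ hσ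
    refine Eventually.of_forall fun t ↦ ?_
    by_cases ht : t ∈ tsupport g
    · rw [norm_mul]
      gcongr
      exact hM _ ⟨(σ, t), ⟨Ioc_subset_Icc_self hσ, ht⟩, rfl⟩
    · simp [image_eq_zero_of_notMem_tsupport ht]
  · have hcont : ContinuousOn (fun σ : ℝ ↦ G (σ + 2 * π * t * Complex.I)) (Ici 0) :=
      hG.comp (by fun_prop) fun σ hσ ↦ by simpa using hσ
    have := (hcont 0 self_mem_Ici).mono Ioi_subset_Ici_self
    simpa using this.tendsto.mul_const (g t)

lemma integral_mul_fourier_of_continuousOn (hF : AEStronglyMeasurable F) (hC : ∀ u, ‖F u‖ ≤ C)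
    (hG : ContinuousOn G {z | 0 ≤ z.re}) (hGF : EqOn (laplaceTransform F) G {z | 0 < z.re})
    (hg : Integrable g) (hgs : HasCompactSupport g) (hgF : Integrable (𝓕 g)) :
    ∫ u in Ioi (0 : ℝ), F u * 𝓕 g u = ∫ t : ℝ, G (2 * π * t * Complex.I) * g t := by
  refine tendsto_nhds_unique ((tendsto_integral_mul_exp_neg_mul hF hC hgF).congr' ?_)
    (tendsto_integral_mul_of_continuousOn hG hg hgs)
  filter_upwards [self_mem_nhdsWithin] with σ (hσ : 0 < σ)
  rw [integral_mul_exp_neg_mul_fourier hF hC hσ hg]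
  congr with t
  have ht : (σ + 2 * π * t * Complex.I : ℂ) ∈ {z : ℂ | 0 < z.re} := by simpa
  rw [hGF ht]

lemma fourier_fourierChar_smul (g : ℝ → ℂ) (y : ℝ) :
    𝓕 (fun t ↦ 𝐞 (t * y) • g t) = fun u ↦ 𝓕 g (u - y) := by
  ext u
  simp_rw [Real.fourier_real_eq, smul_smul, ← AddChar.map_add_eq_mul]
  congr with t
  ring_nf

lemma tendsto_integral_mul_fourier_sub (hF : AEStronglyMeasurable F) (hC : ∀ u, ‖F u‖ ≤ C)
    (hG : ContinuousOn G {z | 0 ≤ z.re}) (hGF : EqOn (laplaceTransform F) G {z | 0 < z.re})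
    (hg : Integrable g) (hgs : HasCompactSupport g) (hgF : Integrable (𝓕 g)) :
    Tendsto (fun y ↦ ∫ u in Ioi (0 : ℝ), F u * 𝓕 g (u - y)) atTop (𝓝 0) := by
  have hshift (y : ℝ) : ∫ u in Ioi (0 : ℝ), F u * 𝓕 g (u - y) =
      𝓕 (fun t : ℝ ↦ G (2 * π * t * Complex.I) * g t) (-y) := by
    have hchar : Integrable fun t ↦ 𝐞 (t * y) • g t := by
      simpa [mul_comm y] using (Real.fourierIntegral_convergent_iff (-y)).2 hg
    have hfourier := fourier_fourierChar_smul g y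
    have h := integral_mul_fourier_of_continuousOn hF hC hG hGF hchar hgs.smul_left
      (hfourier ▸ hgF.comp_sub_right y)
    rw [hfourier] at h
    rw [h, Real.fourier_real_eq]
    simp only [mul_neg, neg_neg, mul_smul_comm]
  simp_rw [hshift]
  exact (Real.zero_at_infty_fourier _).comp (tendsto_neg_atTop_atBot.mono_right atBot_le_cocompact)

end

section

variable {F : ℝ → ℝ} {C : ℝ}

lemma tendsto_integral_mul_sinc_sq (hF : AEStronglyMeasurable F) (hC : ∀ u, |F u| ≤ C)
    {G : ℂ → ℂ} (hG : ContinuousOn G {z | 0 ≤ z.re})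
    (hGF : EqOn (laplaceTransform fun u ↦ F u) G {z | 0 < z.re}) {T : ℝ} (hT : 0 < T) :
    Tendsto (fun y ↦ ∫ u in Ioi (0 : ℝ), F u * Real.sinc (T * (u - y)) ^ 2) atTop (𝓝 0) := by
  set r := T / (2 * π) with hr
  have hr0 : 0 < r := by positivity
  have hfourier (w : ℝ) : 𝓕 (triangle r) w = ((2 * r) ^ 2 * Real.sinc (T * w) ^ 2 : ℝ) := by
    rw [fourier_triangle hr0.le, show 2 * π * r = T by rw [hr]; field_simp]
    push_cast
    ring
  have hint : Integrable (𝓕 (triangle r)) := by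
    simp_rw [funext hfourier]
    exact ((integrable_sinc_sq.comp_mul_left' hT.ne').const_mul _).ofReal
  have h := tendsto_integral_mul_fourier_sub
    (Complex.continuous_ofReal.comp_aestronglyMeasurable hF) (fun u ↦ by simpa using hC u) hG hGF
    (integrable_triangle r) (hasCompactSupport_triangle r) hint
  simp only [hfourier, ← Complex.ofReal_mul, integral_complex_ofReal, mul_left_comm (F _),
    integral_const_mul] at h
  rw [← Complex.ofReal_zero, tendsto_ofReal_iff] at h
  have hr2 : (2 * r) ^ 2 ≠ 0 := by positivity
  simpa using (h.const_mul ((2 * r) ^ 2)⁻¹).congr fun y ↦ inv_mul_cancel_left₀ hr2 _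

lemma exists_lt_integral_sinc_sq {c h : ℝ} (hc : c < 1) (hh : 0 < h) :
    ∃ T > 0, c * ∫ v, Real.sinc (T * v) ^ 2 < ∫ v in -h..h, Real.sinc (T * v) ^ 2 := by
  have hlim : Tendsto (fun T ↦ ∫ v in T * -h..T * h, Real.sinc v ^ 2) atTop
      (𝓝 (∫ v, Real.sinc v ^ 2)) :=
    intervalIntegral_tendsto_integral integrable_sinc_sq
      (tendsto_id.atTop_mul_const_of_neg (neg_lt_zero.2 hh)) (tendsto_id.atTop_mul_const hh)
  obtain ⟨T, hT, hT0⟩ := ((hlim.eventually_const_lt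
    (mul_lt_of_lt_one_left integral_sinc_sq_pos hc)).and (eventually_gt_atTop 0)).exists
  refine ⟨T, hT0, ?_⟩
  rw [Measure.integral_comp_mul_left (fun v ↦ Real.sinc v ^ 2),
    intervalIntegral.integral_comp_mul_left (fun v ↦ Real.sinc v ^ 2) hT0.ne',
    abs_of_pos (inv_pos.2 hT0), smul_eq_mul, smul_eq_mul, mul_left_comm]
  gcongr

-- Integrate `F ≥ (C + m) 𝟙_{[y - h, y + h]} - C` against the kernel.
lemma le_integral_mul_comp_sub (hF : AEStronglyMeasurable F) (hC : ∀ u, |F u| ≤ C)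
    {K : ℝ → ℝ} (hK : Integrable K) (hK0 : ∀ v, 0 ≤ K v) {m h y : ℝ} (hh : 0 ≤ h)
    (hm : ∀ u ∈ Icc (y - h) (y + h), m ≤ F u) :
    (C + m) * (∫ v in -h..h, K v) - C * ∫ v, K v ≤ ∫ u, F u * K (u - y) := by
  have hsub : Integrable fun u ↦ K (u - y) := hK.comp_sub_right y
  have hmain : Integrable (indicator (Ioc (-h) h) K) := hK.indicator measurableSet_Ioc
  calc (C + m) * (∫ v in -h..h, K v) - C * ∫ v, K v
      = ∫ v, ((C + m) * indicator (Ioc (-h) h) K v - C * K v) := by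
        rw [integral_sub (hmain.const_mul _) (hK.const_mul _), integral_const_mul,
          integral_const_mul, integral_indicator measurableSet_Ioc,
          intervalIntegral.integral_of_le (by linarith)]
    _ = ∫ u, ((C + m) * indicator (Ioc (-h) h) K (u - y) - C * K (u - y)) :=
        (integral_sub_right_eq_self _ y).symm
    _ ≤ ∫ u, F u * K (u - y) := by
      refine integral_mono (((hmain.const_mul _).sub (hK.const_mul _)).comp_sub_right y)
        (hsub.bdd_mul hF (Eventually.of_forall hC)) fun u ↦ ?_
      by_cases hu : u - y ∈ Ioc (-h) h
      · simp only [indicator_of_mem hu]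
        rw [← sub_mul, add_sub_cancel_left]
        exact mul_le_mul_of_nonneg_right (hm u ⟨by linarith [hu.1], by linarith [hu.2]⟩) (hK0 _)
      · simp only [indicator_of_notMem hu]
        rw [mul_zero, zero_sub, ← neg_mul]
        exact mul_le_mul_of_nonneg_right (abs_le.1 (hC u)).1 (hK0 _)

lemma eventually_exists_lt_of_tendsto_integral_sinc_sq (hF : AEStronglyMeasurable F)
    (hC : ∀ u, |F u| ≤ C)
    (hlim : ∀ T > 0, Tendsto (fun y ↦ ∫ u in Ioi (0 : ℝ), F u * Real.sinc (T * (u - y)) ^ 2)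
      atTop (𝓝 0)) {m h : ℝ} (hm : 0 < m) (hh : 0 < h) :
    ∀ᶠ y in atTop, ∃ u ∈ Icc (y - h) (y + h), F u < m := by
  have hC0 : 0 ≤ C := (abs_nonneg _).trans (hC 0)
  obtain ⟨T, hT, hmass⟩ :=
    exists_lt_integral_sinc_sq ((div_lt_one (by positivity)).2 (lt_add_of_pos_right C hm)) hh
  rw [div_mul_eq_mul_div, div_lt_iff₀' (by positivity), ← sub_pos] at hmass
  filter_upwards [(hlim T hT).eventually_lt_const hmass, eventually_gt_atTop h] with y hy hhy
  by_contra! hge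
  refine hy.not_ge ?_
  rw [← integral_indicator measurableSet_Ioi]
  simp only [indicator_mul_left]
  refine le_integral_mul_comp_sub (hF.indicator measurableSet_Ioi) (fun u ↦ ?_)
    (integrable_sinc_sq.comp_mul_left' hT.ne') (fun _ ↦ sq_nonneg _) hh.le fun u hu ↦ ?_
  · exact (norm_indicator_le_norm_self F u).trans (hC u)
  · rw [indicator_of_mem (show u ∈ Ioi 0 from mem_Ioi.2 (by linarith [hu.1]))]
    exact hge u hu

/-- Slow decrease at `+∞` in the sense of R. Schmidt: beyond some point, `F` drops by at most `ε`
over every interval of length `δ`. This is the one-sided Tauberian condition, satisfied by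
`u ↦ S (exp u) / exp u` for monotone `S` of linear growth. -/
def SlowlyDecreasing (F : ℝ → ℝ) : Prop :=
  ∀ ε > 0, ∃ δ > 0, ∀ᶠ y in atTop, ∀ u ∈ Icc y (y + δ), F y - ε ≤ F u

theorem SlowlyDecreasing.tendsto_zero_of_laplaceTransform (hslow : SlowlyDecreasing F)
    (hF : AEStronglyMeasurable F) (hC : ∀ u, |F u| ≤ C)
    {G : ℂ → ℂ} (hG : ContinuousOn G {z | 0 ≤ z.re})
    (hGF : EqOn (laplaceTransform fun u ↦ F u) G {z | 0 < z.re}) :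
    Tendsto F atTop (𝓝 0) := by
  have hlim (T : ℝ) (hT : T > 0) := tendsto_integral_mul_sinc_sq hF hC hG hGF hT
  have hlim_neg (T : ℝ) (hT : T > 0) :
      Tendsto (fun y ↦ ∫ u in Ioi (0 : ℝ), (-F) u * Real.sinc (T * (u - y)) ^ 2) atTop (𝓝 0) := by
    simpa [integral_neg] using (hlim T hT).neg
  rw [Metric.tendsto_nhds]
  intro ε hε
  obtain ⟨δ, hδ, hdecr⟩ := hslow (ε / 2) (half_pos hε)
  have hupper := (tendsto_atTop_add_const_right atTop (δ / 2) tendsto_id).eventually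
    (eventually_exists_lt_of_tendsto_integral_sinc_sq hF hC hlim (half_pos hε) (half_pos hδ))
  have hlower := (tendsto_atTop_add_const_right atTop (-(δ / 2)) tendsto_id).eventually
    (eventually_exists_lt_of_tendsto_integral_sinc_sq hF.neg (by simpa using hC) hlim_neg
      (half_pos hε) (half_pos hδ))
  have hdecr' := (tendsto_atTop_add_const_right atTop (-δ) tendsto_id).eventually
    (eventually_forall_ge_atTop.2 hdecr)
  filter_upwards [hdecr, hdecr', hupper, hlower] with y hy hy' ⟨u, hu, hFu⟩ ⟨v, hv, hFv⟩
  simp only [id, mem_Icc, Pi.neg_apply] at hy hy' hu hv hFv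
  have hyu := hy u ⟨by linarith, by linarith⟩
  have hvy := hy' v (by linarith) y ⟨by linarith, by linarith⟩
  rw [Real.dist_eq, sub_zero, abs_lt]
  constructor <;> linarith

end

lemma laplaceTransform_exp_neg_mul_comp_exp (S : ℝ → ℂ) (z : ℂ) :
    laplaceTransform (fun u ↦ Real.exp (-u) * S (Real.exp u)) z =
      ∫ t in Ioi (1 : ℝ), S t * t ^ (-(1 + z + 1)) := by
  rw [← Real.exp_zero, ← integral_comp_exp_Ioi, laplaceTransform]
  refine setIntegral_congr_fun measurableSet_Ioi fun u _ ↦ ?_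
  have hexp : (Real.exp (-u) : ℂ) * Complex.exp (-z * u) =
      Real.exp u * (Real.exp u : ℂ) ^ (-(1 + z + 1)) := by
    rw [Complex.cpow_def_of_ne_zero (by simp), ← Complex.ofReal_log (Real.exp_pos u).le,
      Real.log_exp]
    push_cast
    rw [← Complex.exp_add, ← Complex.exp_add]
    ring_nf
  rw [Complex.real_smul]
  linear_combination S (Real.exp u) * hexp

section

variable {S : ℝ → ℝ} {C κ : ℝ}

lemma abs_exp_neg_mul_comp_exp_le (hSC : ∀ x > 0, |S x| ≤ C * x) (u : ℝ) :
    |Real.exp (-u) * S (Real.exp u)| ≤ C := by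
  rw [abs_mul, Real.abs_exp, Real.exp_neg, inv_mul_le_iff₀ (Real.exp_pos u), mul_comm]
  exact hSC _ (Real.exp_pos u)

lemma slowlyDecreasing_exp_neg_mul_comp_exp_sub_const (hS : Monotone S)
    (hSC : ∀ x > 0, |S x| ≤ C * x) :
    SlowlyDecreasing fun u ↦ Real.exp (-u) * S (Real.exp u) - κ := by
  have hC0 : 0 ≤ C := by simpa using (abs_nonneg _).trans (hSC 1 one_pos)
  refine fun ε hε ↦ ⟨ε / (C + 1), by positivity, Eventually.of_forall fun y u hu ↦ ?_⟩
  set f := Real.exp (-y) * S (Real.exp y) with hf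
  have hdist : 0 ≤ 1 - Real.exp (-(u - y)) := by simpa using hu.1
  have hexp := Real.add_one_le_exp (-(u - y))
  have hdrop : f * (1 - Real.exp (-(u - y))) ≤ ε := calc
    f * (1 - Real.exp (-(u - y))) ≤ C * (ε / (C + 1)) := by
      gcongr
      · exact (le_abs_self f).trans (abs_exp_neg_mul_comp_exp_le hSC y)
      · linarith [hu.2]
    _ = ε * (C / (C + 1)) := by ring
    _ ≤ ε := mul_le_of_le_one_right hε.le ((div_le_one (by positivity)).2 (by linarith))
  have hmono : f * Real.exp (-(u - y)) ≤ Real.exp (-u) * S (Real.exp u) := calc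
    f * Real.exp (-(u - y)) = Real.exp (-u) * S (Real.exp y) := by
      rw [hf, show -u = -y + -(u - y) by ring, Real.exp_add]
      ring
    _ ≤ Real.exp (-u) * S (Real.exp u) := by
      gcongr
      exact hS (Real.exp_le_exp.2 hu.1)
  linarith

lemma laplaceTransform_exp_neg_mul_comp_exp_sub_const (hS : Measurable S)
    (hSC : ∀ x > 0, |S x| ≤ C * x) {z w : ℂ} (hz : 0 < z.re)
    (hw : (1 + z) * ∫ t in Ioi (1 : ℝ), S t * (t : ℂ) ^ (-(1 + z + 1)) = w + κ / z) :
    laplaceTransform (fun u ↦ ↑(Real.exp (-u) * S (Real.exp u) - κ)) z = (w - κ) / (1 + z) := by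
  have hz0 : z ≠ 0 := Complex.ne_zero_of_re_pos hz
  have hz1 : 1 + z ≠ 0 :=
    Complex.ne_zero_of_re_pos (by rw [Complex.add_re, Complex.one_re]; linarith)
  rw [← laplaceTransform_exp_neg_mul_comp_exp (fun t ↦ S t)] at hw
  simp only [Complex.ofReal_sub, Complex.ofReal_mul]
  rw [laplaceTransform_sub (integrableOn_mul_exp_neg (by fun_prop)
      (fun u ↦ by exact_mod_cast abs_exp_neg_mul_comp_exp_le hSC u) hz)
    (integrableOn_mul_exp_neg (by fun_prop) (fun _ ↦ le_rfl) hz), laplaceTransform_const _ hz]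
  field_simp at hw ⊢
  linear_combination hw

theorem tendsto_div_of_mul_integral_mul_cpow_eq {G : ℂ → ℂ} (hS : Monotone S)
    (hSC : ∀ x > 0, |S x| ≤ C * x) (hG : ContinuousOn G {s | 1 ≤ s.re})
    (hSG : ∀ s : ℂ, 1 < s.re →
      s * ∫ t in Ioi (1 : ℝ), S t * (t : ℂ) ^ (-(s + 1)) = G s + κ / (s - 1)) :
    Tendsto (fun x ↦ S x / x) atTop (𝓝 κ) := by
  have hmeas := hS.measurable
  have hcont : ContinuousOn (fun z ↦ (G (1 + z) - κ) / (1 + z)) {z | 0 ≤ z.re} := by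
    refine ((hG.comp (by fun_prop) fun z hz ↦ by simpa using hz).sub continuousOn_const).div
      (by fun_prop) fun z (hz : 0 ≤ z.re) ↦ Complex.ne_zero_of_re_pos ?_
    rw [Complex.add_re, Complex.one_re]
    linarith
  have hlaplace : EqOn (laplaceTransform fun u ↦ ↑(Real.exp (-u) * S (Real.exp u) - κ))
      (fun z ↦ (G (1 + z) - κ) / (1 + z)) {z | 0 < z.re} := fun z hz ↦
    laplaceTransform_exp_neg_mul_comp_exp_sub_const hmeas hSC hz <| by
      simpa using hSG (1 + z) (by simpa using hz)
  have hbound (u : ℝ) : |Real.exp (-u) * S (Real.exp u) - κ| ≤ C + |κ| :=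
    (abs_sub _ _).trans (add_le_add_left (abs_exp_neg_mul_comp_exp_le hSC u) |κ|)
  have hlim := (slowlyDecreasing_exp_neg_mul_comp_exp_sub_const hS hSC (κ := κ))
    |>.tendsto_zero_of_laplaceTransform (by fun_prop) hbound hcont hlaplace
  refine Tendsto.congr' ?_ (by simpa using (hlim.comp Real.tendsto_log_atTop).add_const κ)
  filter_upwards [eventually_gt_atTop 0] with x hx
  simp [Real.exp_neg, Real.exp_log hx, inv_mul_eq_div]

end

section

open ArithmeticFunction.vonMangoldt Chebyshev

lemma residueClass_zmod_one (a : ZMod 1) : residueClass a = ⇑Λ :=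
  funext fun _ ↦ indicator_of_mem (s := {n : ℕ | (n : ZMod 1) = a}) (Subsingleton.elim _ a) _

lemma mul_integral_psi_mul_cpow {s : ℂ} (hs : 1 < s.re) :
    s * ∫ t in Ioi (1 : ℝ), ψ t * (t : ℂ) ^ (-(s + 1)) =
      LFunctionResidueClassAux (1 : ZMod 1) s + 1 / (s - 1) := by
  have hbound : (fun n ↦ ∑ k ∈ Finset.Icc 1 n, Λ k) =O[atTop] fun n : ℕ ↦ (n : ℝ) ^ (1 : ℝ) := by
    refine Asymptotics.IsBigO.of_bound (Real.log 4 + 4) (Eventually.of_forall fun n ↦ ?_)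
    have hpsi := psi_le_const_mul_self n.cast_nonneg
    rw [psi, Nat.floor_natCast] at hpsi
    rw [Real.rpow_one,
      Real.norm_of_nonneg (Finset.sum_nonneg fun _ _ ↦ ArithmeticFunction.vonMangoldt_nonneg),
      Real.norm_of_nonneg n.cast_nonneg]
    exact hpsi
  have hL := LSeries_eq_mul_integral_of_nonneg Λ zero_le_one hs hbound
    fun _ ↦ ArithmeticFunction.vonMangoldt_nonneg
  have haux := eqOn_LFunctionResidueClassAux (q := 1) (a := 1) isUnit_one hs
  simp only [residueClass_zmod_one, Nat.totient_one, Nat.cast_one, inv_one] at haux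
  rw [haux, hL, sub_add_cancel]
  simp only [psi, Complex.ofReal_sum]
  rfl

theorem tendsto_psi_div : Tendsto (fun x ↦ ψ x / x) atTop (𝓝 1) :=
  tendsto_div_of_mul_integral_mul_cpow_eq psi_mono
    (fun x hx ↦ (abs_of_nonneg (psi_nonneg x)).trans_le (psi_le_const_mul_self (le_of_lt hx)))
    (continuousOn_LFunctionResidueClassAux _)
    fun _ hs ↦ by simpa using mul_integral_psi_mul_cpow hs

theorem tendsto_theta_div : Tendsto (fun x ↦ θ x / x) atTop (𝓝 1) := by
  have hsqrt : Real.sqrt =o[atTop] (id : ℝ → ℝ) := by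
    refine Asymptotics.isLittleO_of_tendsto (fun x hx ↦ by simp_all) ?_
    simpa [Function.comp_def, Real.sqrt_div_self] using
      tendsto_inv_atTop_zero.comp Real.tendsto_sqrt_atTop
  have hdiff := (isBigO_psi_sub_theta_sqrt.trans_isLittleO hsqrt).tendsto_div_nhds_zero
  simpa [sub_div] using tendsto_psi_div.sub hdiff

lemma tendsto_theta_mul_div {c : ℝ} (hc : 0 ≤ c) :
    Tendsto (fun x ↦ θ (c * x) / x) atTop (𝓝 c) := by
  rcases hc.eq_or_lt with rfl | hc
  · simp [theta_zero]
  · have h := (tendsto_theta_div.comp (tendsto_id.const_mul_atTop hc)).const_mul c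
    rw [mul_one] at h
    refine h.congr fun x ↦ ?_
    simp only [Function.comp_apply, id]
    field_simp

lemma eventually_lt_theta_mul_sub_theta_mul {a b : ℝ} (ha : 0 ≤ a) (hab : a + 1 < b) :
    ∀ᶠ x in atTop, x < θ (b * x) - θ (a * x) := by
  have hlim := (tendsto_theta_mul_div (c := b) (by linarith)).sub (tendsto_theta_mul_div ha)
  filter_upwards [hlim.eventually_const_lt (show 1 < b - a by linarith), eventually_gt_atTop 0]
    with x hx hx0
  rwa [← sub_div, one_lt_div hx0] at hx

lemma theta_sub_theta {x y : ℝ} (hxy : x ≤ y) :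
    θ y - θ x = ∑ p ∈ Finset.Ioc ⌊x⌋₊ ⌊y⌋₊ with p.Prime, Real.log p := by
  simp_rw [theta, Finset.sum_filter]
  rw [← Finset.sum_Ioc_consecutive _ (Nat.zero_le _) (Nat.floor_mono hxy), add_sub_cancel_left]

lemma exists_prime_not_dvd_of_log_lt_theta_sub {r : ℕ} (hr : r ≠ 0) {x y : ℝ} (hx : 0 ≤ x)
    (hxy : x ≤ y) (hlog : Real.log r < θ y - θ x) :
    ∃ p : ℕ, p.Prime ∧ x < p ∧ p ≤ y ∧ ¬ p ∣ r := by
  by_contra! hdvd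
  set P := {p ∈ Finset.Ioc ⌊x⌋₊ ⌊y⌋₊ | p.Prime}
  have hprime : ∀ p ∈ P, p.Prime := fun p hp ↦ (Finset.mem_filter.1 hp).2
  have hprod : ∏ p ∈ P, p ∣ r := by
    refine Finset.prod_primes_dvd r (fun p hp ↦ (hprime p hp).prime) fun p hp ↦ ?_
    obtain ⟨hxp, hpy⟩ := Finset.mem_Ioc.1 (Finset.mem_filter.1 hp).1
    exact hdvd p (hprime p hp) ((Nat.floor_lt hx).1 hxp) ((Nat.le_floor_iff (hx.trans hxy)).1 hpy)
  refine hlog.not_ge ?_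
  calc θ y - θ x = Real.log (∏ p ∈ P, p : ℕ) := by
        rw [theta_sub_theta hxy, Nat.cast_prod,
          Real.log_prod fun p hp ↦ by exact_mod_cast (hprime p hp).ne_zero]
    _ ≤ Real.log r := by
        gcongr
        · exact_mod_cast Finset.prod_pos fun p hp ↦ (hprime p hp).pos
        · exact Nat.le_of_dvd (Nat.pos_of_ne_zero hr) hprod

end

theorem exists_prime_in_log_window_general {a b : ℝ} (ha : 0 ≤ a) (hab : a + 1 < b) :
    ∀ᶠ r : ℕ in atTop,
      ∃ l : ℕ, l.Prime ∧ a * Real.log r < l ∧ l ≤ b * Real.log r ∧ ¬ l ∣ r := by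
  have hlog : Tendsto (fun r : ℕ ↦ Real.log r) atTop atTop :=
    Real.tendsto_log_atTop.comp tendsto_natCast_atTop_atTop
  filter_upwards [hlog.eventually (eventually_lt_theta_mul_sub_theta_mul ha hab),
    eventually_ne_atTop 0] with r hr hr0
  exact exists_prime_not_dvd_of_log_lt_theta_sub hr0 (mul_nonneg ha (Real.log_natCast_nonneg r))
    (mul_le_mul_of_nonneg_right (by linarith) (Real.log_natCast_nonneg r)) hr

theorem exists_prime_in_log_window (ε : ℝ) (hε : 0 < ε) :
    ∃ R : ℕ, ∀ r : ℕ, R ≤ r →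
      ∃ l : ℕ, l.Prime ∧ Real.log r < l ∧ (l : ℝ) ≤ (2 + ε) * Real.log r ∧ ¬ l ∣ r := by
  simpa using eventually_atTop.1
    (exists_prime_in_log_window_general (b := 2 + ε) zero_le_one (by linarith))
end

section
/- Let p > 2 be a fixed prime and ε > 0. Then there exists a constant C and R such that for all r ≥ R, v(p, p^r − 1) ≤ C·r^{(2+ε)·ln(p)}; i.e., v(p, p^r − 1) = O(r^{(2+ε)ln p}) as a function of r. (For p = 2 the corresponding bound is v(2, 2^r − 1) = O(r^{2+ε}).) -/
/-!
Let `K = ∑ e i * q ^ i` be a multiple of `k` prime to `p`, where `q` is a power of `p` exceeding the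
digit sum `σ = ∑ e i`. For `t` with `t ^ q = t`, Frobenius gives
`(1 + t f) ^ K = ∏ (1 + t f ^ q ^ i) ^ e i`, a polynomial in `t` of degree at most `σ` whose linear
coefficient is the additive polynomial `L f = ∑ e i * f ^ q ^ i`. Interpolating at `σ + 1` such `t`
writes `L f` as a linear combination of `σ + 1` powers with exponent `K`. Since `L` is a sum of
terms homogeneous of distinct degrees, `e 0 * f` is in turn a linear combination of the values of
`L` at scalar multiples of `f`, one for each digit. The scalars are absorbed as they are `k`-th
powers.

For `k = p ^ r - 1` take `q = p ^ (r + 1)`, which is congruent to `p` modulo `k`, so that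
`K = ∑ (p - 1) * q ^ i` over `i < r` is a multiple of `k` with digit sum `r (p - 1) < q`. The
resulting bound is quadratic in `r`, and `2 ≤ (2 + ε) ln p` for `p ≥ 3`.
-/

open Polynomial

section Interpolation

variable {F : Type*} [Field F] {n : ℕ} {v : Fin n → F}

theorem isUnit_vandermonde (hv : Function.Injective v) : IsUnit (Matrix.vandermonde v) :=
  (Matrix.isUnit_iff_isUnit_det _).mpr (Matrix.det_vandermonde_ne_zero_iff.mpr hv).isUnit

theorem exists_sum_mul_pow_eq_ite (hv : Function.Injective v) (j : Fin n) :
    ∃ c : Fin n → F, ∀ i : Fin n, ∑ m, c m * v m ^ (i : ℕ) = if i = j then 1 else 0 := by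
  obtain ⟨c, hc⟩ :=
    Matrix.vecMul_surjective_iff_isUnit.mpr (isUnit_vandermonde hv) (Pi.single j 1)
  exact ⟨c, fun i ↦ (congrFun hc i).trans (Pi.single_apply j 1 i)⟩

theorem exists_sum_pow_mul_eq_ite (hv : Function.Injective v) (j : Fin n) :
    ∃ d : Fin n → F, ∀ i : Fin n, ∑ m : Fin n, v i ^ (m : ℕ) * d m =
      if i = j then 1 else 0 := by
  obtain ⟨d, hd⟩ :=
    Matrix.mulVec_surjective_iff_isUnit.mpr (isUnit_vandermonde hv) (Pi.single j 1)
  exact ⟨d, fun i ↦ (congrFun hd i).trans (Pi.single_apply j 1 i)⟩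

theorem exists_sum_smul_eval_eq_coeff (A : Type*) [CommRing A] [Algebra F A]
    (hv : Function.Injective v) (j : Fin n) :
    ∃ c : Fin n → F, ∀ P : A[X], P.natDegree < n →
      ∑ m, c m • P.eval (algebraMap F A (v m)) = P.coeff j := by
  obtain ⟨c, hc⟩ := exists_sum_mul_pow_eq_ite hv j
  refine ⟨c, fun P hP ↦ ?_⟩
  calc ∑ m, c m • P.eval (algebraMap F A (v m))
      = ∑ m, ∑ i : Fin n, (c m * v m ^ (i : ℕ)) • P.coeff i := by
        refine Finset.sum_congr rfl fun m _ ↦ ?_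
        rw [eval_eq_sum_range' hP, Finset.sum_range, Finset.smul_sum]
        refine Finset.sum_congr rfl fun i _ ↦ ?_
        rw [← map_pow, mul_comm, ← Algebra.smul_def, smul_smul]
    _ = ∑ i : Fin n, (∑ m, c m * v m ^ (i : ℕ)) • P.coeff i := by
        rw [Finset.sum_comm]
        simp only [Finset.sum_smul]
    _ = P.coeff j := by
        simp [hc]

end Interpolation

section LinearFactorProd

variable {ι A : Type*} [CommSemiring A]

theorem coeff_one_prod {s : Finset ι} {f : ι → A[X]} (hf : ∀ i ∈ s, (f i).coeff 0 = 1) :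
    (∏ i ∈ s, f i).coeff 1 = ∑ i ∈ s, (f i).coeff 1 := by
  classical
  induction s using Finset.induction_on with
  | empty => simp [coeff_one]
  | insert a s ha ih =>
    obtain ⟨hfa, hfs⟩ := Finset.forall_mem_insert _ _ _ |>.mp hf
    rw [Finset.prod_insert ha, Finset.sum_insert ha, mul_coeff_one, coeff_zero_prod,
      Finset.prod_eq_one hfs, hfa, ih hfs]
    ring

variable [Fintype ι]

/-- The polynomial `∏ i, (1 + b i * X) ^ e i`. With `b i = g ^ q ^ i` it is the expansion of
`(1 + t * g) ^ ∑ i, e i * q ^ i` in a variable `t` fixed by the `q`-Frobenius. -/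
noncomputable def linearFactorProd (b : ι → A) (e : ι → ℕ) : A[X] :=
  ∏ i, (1 + C (b i) * X) ^ e i

theorem natDegree_linearFactorProd_le (b : ι → A) (e : ι → ℕ) :
    (linearFactorProd b e).natDegree ≤ ∑ i, e i := by
  refine (natDegree_prod_le _ _).trans (Finset.sum_le_sum fun i _ ↦ ?_)
  have hlin : (1 + C (b i) * X).natDegree ≤ 1 := by compute_degree
  simpa using natDegree_pow_le_of_le (e i) hlin

theorem coeff_one_linearFactorProd (b : ι → A) (e : ι → ℕ) :
    (linearFactorProd b e).coeff 1 = ∑ i, e i * b i := by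
  have hpow (i : ι) : ((1 + C (b i) * X) ^ e i).coeff 1 = e i * b i := by
    rw [← Fin.prod_const, coeff_one_prod fun _ _ ↦ by simp]
    simp [coeff_one]
  rw [linearFactorProd, coeff_one_prod fun i _ ↦ by simp [coeff_zero_eq_eval_zero]]
  exact Finset.sum_congr rfl fun i _ ↦ hpow i

end LinearFactorProd

section Frobenius

variable {F A : Type*} [CommSemiring F] [CommSemiring A] [Algebra F A] {p : ℕ} [Fact p.Prime]
  {s r : ℕ}

theorem one_add_smul_pow_pow [CharP A p] {t : F} (ht : t ^ p ^ s = t) (g : A) (i : ℕ) :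
    (1 + t • g) ^ (p ^ s) ^ i = 1 + t • g ^ (p ^ s) ^ i := by
  induction i with
  | zero => simp
  | succ i ih =>
    rw [pow_succ, pow_mul, ih, add_pow_char_pow, one_pow, _root_.smul_pow, ht, ← pow_mul]

theorem one_add_smul_pow_eq_eval [CharP A p] {t : F} (ht : t ^ p ^ s = t) (g : A)
    (e : Fin r → ℕ) :
    (1 + t • g) ^ (∑ i, e i * (p ^ s) ^ (i : ℕ)) =
      (linearFactorProd (fun i : Fin r ↦ g ^ (p ^ s) ^ (i : ℕ)) e).eval (algebraMap F A t) := by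
  rw [linearFactorProd, eval_prod, ← Finset.prod_pow_eq_pow_sum]
  refine Finset.prod_congr rfl fun i _ ↦ ?_
  rw [mul_comm, pow_mul, one_add_smul_pow_pow ht, Algebra.smul_def]
  simp [mul_comm]

theorem exists_sum_smul_one_add_smul_pow_eq {F : Type*} [Field F] (A : Type*) [CommRing A]
    [Algebra F A] [CharP A p] {e : Fin r → ℕ} (he : 0 < ∑ i, e i) {v : Fin (∑ i, e i + 1) → F}
    (hv : Function.Injective v) (hvs : ∀ m, v m ^ p ^ s = v m) :
    ∃ c : Fin (∑ i, e i + 1) → F, ∀ g : A,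
      ∑ m, c m • (1 + v m • g) ^ (∑ i, e i * (p ^ s) ^ (i : ℕ)) =
        ∑ i, e i * g ^ (p ^ s) ^ (i : ℕ) := by
  obtain ⟨c, hc⟩ := exists_sum_smul_eval_eq_coeff A hv ⟨1, by omega⟩
  refine ⟨c, fun g ↦ ?_⟩
  simp only [one_add_smul_pow_eq_eval (hvs _)]
  rw [hc _ (Nat.lt_succ_of_le (natDegree_linearFactorProd_le _ _)), coeff_one_linearFactorProd]

end Frobenius

theorem sum_pos_of_not_dvd {p r : ℕ} [NeZero r] {e : Fin r → ℕ} (he : ¬ p ∣ e 0) :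
    0 < ∑ i, e i := by
  have he0 : 0 < e 0 := Nat.pos_of_ne_zero fun h ↦ he (h.symm ▸ dvd_zero p)
  exact he0.trans_le (Finset.single_le_sum (fun _ _ ↦ Nat.zero_le _) (Finset.mem_univ 0))

theorem ne_zero_of_sum_lt_pow {p s r : ℕ} [NeZero r] {e : Fin r → ℕ} (he : ¬ p ∣ e 0)
    (hes : ∑ i, e i < p ^ s) : s ≠ 0 := by
  rintro rfl
  exact (sum_pos_of_not_dvd he).ne' (Nat.lt_one_iff.mp hes)

theorem natCast_ne_zero_of_dvd (F : Type*) [CommSemiring F] (p : ℕ) [CharP F p] {k q r : ℕ}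
    [NeZero r] {e : Fin r → ℕ} (hpq : p ∣ q) (he : ¬ p ∣ e 0) (hk : k ∣ ∑ i, e i * q ^ (i : ℕ)) :
    (k : F) ≠ 0 := by
  have hq : (q : F) = 0 := (CharP.cast_eq_zero_iff F p q).mpr hpq
  have hsum : ((∑ i, e i * q ^ (i : ℕ) : ℕ) : F) = e 0 := by
    rw [Nat.cast_sum, Fintype.sum_eq_single 0 fun i hi ↦ by simp [hq, hi]]
    simp
  refine ne_zero_of_dvd_ne_zero ?_ (Nat.cast_dvd_cast hk)
  rwa [hsum, Ne, CharP.cast_eq_zero_iff F p]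

theorem exists_sum_smul_sum_smul_pow_eq {F : Type*} [Field F] (A : Type*) [CommRing A]
    [Algebra F A] {r : ℕ} {a : Fin r → ℕ} {μ : F} (hμ : Function.Injective fun i ↦ μ ^ a i)
    (j : Fin r) :
    ∃ d : Fin r → F, ∀ (w : Fin r → A) (g : A),
      ∑ m, d m • ∑ i, w i * (μ ^ (m : ℕ) • g) ^ a i = w j * g ^ a j := by
  obtain ⟨d, hd⟩ := exists_sum_pow_mul_eq_ite hμ j
  refine ⟨d, fun w g ↦ ?_⟩
  calc ∑ m, d m • ∑ i, w i * (μ ^ (m : ℕ) • g) ^ a i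
      = ∑ m : Fin r, ∑ i, ((μ ^ a i) ^ (m : ℕ) * d m) • (w i * g ^ a i) := by
        refine Finset.sum_congr rfl fun m _ ↦ ?_
        rw [Finset.smul_sum]
        refine Finset.sum_congr rfl fun i _ ↦ ?_
        rw [_root_.smul_pow, mul_smul_comm, smul_smul, ← pow_mul, ← pow_mul, mul_comm (m : ℕ),
          mul_comm (d m)]
    _ = ∑ i, (∑ m : Fin r, (μ ^ a i) ^ (m : ℕ) * d m) • (w i * g ^ a i) := by
        rw [Finset.sum_comm]
        simp only [Finset.sum_smul]
    _ = w j * g ^ a j := by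
        simp [hd]

section IsSepClosed

variable (F : Type*) [Field F] [IsSepClosed F] (p : ℕ) [CharP F p]

theorem exists_injective_pow_pow {q : ℕ} (hq : 1 < q) (hpq : p ∣ q) (r : ℕ) :
    ∃ μ : F, Function.Injective fun i : Fin r ↦ μ ^ q ^ (i : ℕ) := by
  rcases eq_or_ne r 0 with rfl | hr
  · exact ⟨0, Function.injective_of_subsingleton _⟩
  have : NeZero ((q ^ r + 1 : ℕ) : F) := ⟨by
    simp [(CharP.cast_eq_zero_iff F p q).mpr hpq, hr]⟩
  obtain ⟨μ, hμ⟩ := HasEnoughRootsOfUnity.exists_primitiveRoot F (q ^ r + 1)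
  have hlt (i : Fin r) : q ^ (i : ℕ) < q ^ r + 1 :=
    Nat.lt_succ_of_le (Nat.pow_le_pow_right hq.le i.2.le)
  exact ⟨μ, fun i j hij ↦ Fin.ext (Nat.pow_right_injective hq (hμ.pow_inj (hlt i) (hlt j) hij))⟩

variable [Fact p.Prime]

theorem exists_injective_forall_pow_eq_self {s n : ℕ} (hs : s ≠ 0) (hn : n ≤ p ^ s) :
    ∃ v : Fin n → F, Function.Injective v ∧ ∀ m, v m ^ p ^ s = v m := by
  have hsep : (X ^ p ^ s - X : F[X]).Separable := galois_poly_separable p _ (dvd_pow_self p hs)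
  have hdeg : (X ^ p ^ s - X : F[X]).natDegree = p ^ s :=
    FiniteField.X_pow_card_pow_sub_X_natDegree_eq F hs (Fact.out : p.Prime).one_lt
  have hcard : Fintype.card ((X ^ p ^ s - X : F[X]).rootSet F) = p ^ s := by
    rw [card_rootSet_eq_natDegree hsep (IsSepClosed.splits_codomain _ hsep), hdeg]
  obtain ⟨v⟩ : Nonempty (Fin n ↪ (X ^ p ^ s - X : F[X]).rootSet F) :=
    Function.Embedding.nonempty_of_card_le (by simpa only [Fintype.card_fin, hcard])
  refine ⟨fun m ↦ v m, Subtype.val_injective.comp v.injective, fun m ↦ ?_⟩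
  simpa [sub_eq_zero] using (mem_rootSet.mp (v m).2).2

theorem exists_forall_sum_smul_one_add_smul_pow_eq (A : Type*) [CommRing A] [Algebra F A]
    [CharP A p] {s r : ℕ} [NeZero r] {e : Fin r → ℕ} (he : ¬ p ∣ e 0) (hes : ∑ i, e i < p ^ s) :
    ∃ c t : Fin r × Fin (∑ i, e i + 1) → F, ∀ g : A,
      ∑ x, c x • (1 + t x • g) ^ (∑ i, e i * (p ^ s) ^ (i : ℕ)) = g := by
  have he0 : (e 0 : F) ≠ 0 := (CharP.cast_eq_zero_iff F p _).not.mpr he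
  have hsum : 0 < ∑ i, e i := sum_pos_of_not_dvd he
  have hs : s ≠ 0 := ne_zero_of_sum_lt_pow he hes
  have hq : 1 < p ^ s := by omega
  obtain ⟨v, hv, hvs⟩ := exists_injective_forall_pow_eq_self F p hs (Nat.succ_le_of_lt hes)
  obtain ⟨c, hc⟩ := exists_sum_smul_one_add_smul_pow_eq A hsum hv hvs
  obtain ⟨μ, hμ⟩ := exists_injective_pow_pow F p hq (dvd_pow_self p hs) r
  obtain ⟨d, hd⟩ := exists_sum_smul_sum_smul_pow_eq A hμ 0
  refine ⟨fun x ↦ (e 0 : F)⁻¹ * d x.1 * c x.2, fun x ↦ v x.2 * μ ^ (x.1 : ℕ), fun g ↦ ?_⟩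
  calc _ = (e 0 : F)⁻¹ • ∑ m, d m • ∑ n, c n •
        (1 + v n • μ ^ (m : ℕ) • g) ^ (∑ i, e i * (p ^ s) ^ (i : ℕ)) := by
        simp only [Fintype.sum_prod_type, Finset.smul_sum, smul_smul, mul_assoc]
    _ = (e 0 : F)⁻¹ • ((e 0 : A) * g) := by
        simp only [hc]
        rw [hd fun i ↦ (e i : A)]
        simp
    _ = g := by
        rw [← nsmul_eq_mul, ← Nat.cast_smul_eq_nsmul F, inv_smul_smul₀ he0]

theorem exists_eq_sum_pow_of_dvd {A : Type*} [CommRing A] [Algebra F A] [CharP A p] {k s r : ℕ}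
    [NeZero r] {e : Fin r → ℕ} (he : ¬ p ∣ e 0) (hes : ∑ i, e i < p ^ s)
    (hk : k ∣ ∑ i, e i * (p ^ s) ^ (i : ℕ)) (f : A) :
    ∃ y : Fin r × Fin (∑ i, e i + 1) → A, f = ∑ x, y x ^ k := by
  obtain ⟨c, t, hct⟩ := exists_forall_sum_smul_one_add_smul_pow_eq F p A he hes
  have : NeZero (k : F) := ⟨
    natCast_ne_zero_of_dvd F p (dvd_pow_self p (ne_zero_of_sum_lt_pow he hes)) he hk⟩
  choose ρ hρ using fun x ↦ IsSepClosed.exists_pow_nat_eq (c x) k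
  obtain ⟨M, hM⟩ := hk
  refine ⟨fun x ↦ ρ x • (1 + t x • f) ^ M, ?_⟩
  calc f = ∑ x, c x • (1 + t x • f) ^ (M * k) := by rw [mul_comm M, ← hM, hct]
    _ = ∑ x, (ρ x • (1 + t x • f) ^ M) ^ k := by simp only [_root_.smul_pow, hρ, pow_mul]

theorem waring_le_card {F : Type*} [Field F] {k : ℕ} {ι : Type*} [Fintype ι]
    (h : ∀ f : F[X], ∃ y : ι → F[X], f = ∑ i, y i ^ k) : waring F k ≤ Fintype.card ι := by
  refine sInf_le ⟨_, rfl, fun f ↦ ?_⟩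
  obtain ⟨y, rfl⟩ := h f
  exact ⟨y ∘ (Fintype.equivFin ι).symm, ((Fintype.equivFin ι).symm.sum_comp (y · ^ k)).symm⟩

theorem waring_le_of_dvd {k s r : ℕ} [NeZero r] {e : Fin r → ℕ} (he : ¬ p ∣ e 0)
    (hes : ∑ i, e i < p ^ s) (hk : k ∣ ∑ i, e i * (p ^ s) ^ (i : ℕ)) :
    waring F k ≤ ((r * (∑ i, e i + 1) : ℕ) : ℕ∞) := by
  simpa using waring_le_card fun f : F[X] ↦ exists_eq_sum_pow_of_dvd F p he hes hk f

end IsSepClosed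

theorem pow_sub_one_dvd_sum_sub_one_mul_pow_succ_pow {p : ℕ} (hp : 0 < p) (r : ℕ) :
    p ^ r - 1 ∣ ∑ i : Fin r, (p - 1) * (p ^ (r + 1)) ^ (i : ℕ) := by
  have hpr : p ^ r ≡ 1 [MOD p ^ r - 1] :=
    ((Nat.modEq_iff_dvd' (Nat.pow_pos hp)).mpr dvd_rfl).symm
  have hq : p ^ (r + 1) ≡ p [MOD p ^ r - 1] := by
    simpa only [pow_succ, one_mul] using hpr.mul_right p
  have hsum : ∑ i : Fin r, (p - 1) * p ^ (i : ℕ) = p ^ r - 1 := by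
    rw [← Finset.mul_sum, ← Finset.sum_range fun i ↦ p ^ i, mul_comm]
    exact geom_sum_mul_of_one_le hp r
  refine (Nat.modEq_zero_iff_dvd).mp (.trans (.sum fun i _ ↦ (hq.pow i).mul_left _) ?_)
  rw [hsum]
  exact Nat.modEq_zero_iff_dvd.mpr dvd_rfl

theorem mul_sub_one_lt_pow_succ {p : ℕ} (hp : 1 < p) (r : ℕ) : r * (p - 1) < p ^ (r + 1) :=
  Nat.mul_lt_mul'' (Nat.lt_pow_self hp) (Nat.sub_lt (Nat.zero_lt_of_lt hp) one_pos)

theorem waring_asymptotic_general (F : Type*) [Field F] [IsSepClosed F] (p : ℕ) [Fact p.Prime]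
    [CharP F p] {r : ℕ} (hr : r ≠ 0) :
    waring F (p ^ r - 1) ≤ ((r * (r * (p - 1) + 1) : ℕ) : ℕ∞) := by
  have hp : p.Prime := Fact.out
  have : NeZero r := ⟨hr⟩
  have he : ¬ p ∣ p - 1 :=
    Nat.not_dvd_of_pos_of_lt (Nat.sub_pos_of_lt hp.one_lt) (Nat.sub_lt hp.pos one_pos)
  have hes : ∑ _i : Fin r, (p - 1) < p ^ (r + 1) := by
    simpa using mul_sub_one_lt_pow_succ hp.one_lt r
  simpa using waring_le_of_dvd F p (e := fun _ : Fin r ↦ p - 1) he hes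
    (pow_sub_one_dvd_sum_sub_one_mul_pow_succ_pow hp.pos r)

theorem two_le_two_add_mul_log {x ε : ℝ} (hx : 3 ≤ x) (hε : 0 ≤ ε) :
    2 ≤ (2 + ε) * Real.log x := by
  have hlog : 1 ≤ Real.log x := by
    rw [Real.le_log_iff_exp_le (by linarith)]
    linarith [Real.exp_one_lt_d9]
  nlinarith

theorem mul_succ_le_floor_mul_rpow {p r : ℕ} (hp : 0 < p) (hr : r ≠ 0) {a : ℝ} (ha : 2 ≤ a) :
    r * (r * (p - 1) + 1) ≤ ⌊(p : ℝ) * (r : ℝ) ^ a⌋₊ := by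
  have hr1 : 1 ≤ r := Nat.one_le_iff_ne_zero.mpr hr
  apply Nat.le_floor
  calc ((r * (r * (p - 1) + 1) : ℕ) : ℝ) ≤ ((p * r ^ 2 : ℕ) : ℝ) := by
        obtain ⟨d, rfl⟩ := Nat.exists_eq_add_of_lt hp
        norm_cast
        simp only [zero_add, Nat.add_sub_cancel]
        nlinarith
    _ = p * (r : ℝ) ^ (2 : ℝ) := by push_cast; rw [Real.rpow_two]
    _ ≤ p * (r : ℝ) ^ a := by
        gcongr
        exact_mod_cast hr1

theorem waring_asymptotic (F : Type*) [Field F] [IsAlgClosed F]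
    (p : ℕ) [Fact p.Prime] [CharP F p] (hp : 2 < p) (ε : ℝ) (hε : 0 < ε) :
    ∃ C : ℝ, 0 < C ∧ ∃ R : ℕ, ∀ r : ℕ, R ≤ r →
      waring F (p ^ r - 1) ≤ ((⌊C * (r : ℝ) ^ ((2 + ε) * Real.log p)⌋₊ : ℕ) : ℕ∞) := by
  have hp0 : 0 < p := by omega
  refine ⟨p, by exact_mod_cast hp0, 1, fun r hr ↦ ?_⟩
  have hr0 : r ≠ 0 := Nat.one_le_iff_ne_zero.mp hr
  exact (waring_asymptotic_general F p hr0).trans <| Nat.cast_le.mpr <|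
    mul_succ_le_floor_mul_rpow hp0 hr0 (two_le_two_add_mul_log (by exact_mod_cast hp) hε.le)
end
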